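/- Let F: ℝ₊ → [0,1] be a Lipschitz continuous c.d.f. with Lipschitz constant L_F ∈ (0, ∞), let u < 1, x₀ > 0, b > 2/π, c(b) > 0 and T > 0. Then 3b²T² x₀^{2(u−1)} (∫₀^{2c(b)/T} |F(x₀) − F(x₀ e^r)| dr)² ≤ L_F² x₀^{2u} e^{4c(b)/T} · 12 b² (c(b))⁴ / T², which is of order O(T^{−2}) as T → ∞. -/

import Mathlib

/-!
For `0 ≤ r ≤ a` the points `x` and `x * exp r` are at distance `x * (exp r - 1) ≤ x * exp a * r`,
so a `K`-Lipschitz function moves by at most `K * x * exp a * r` between them. Integrating over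
`(0, a]` gives `K * x * exp a * a ^ 2 / 2`, to be squared at `a = 2 * c / T`, where the factor
`x ^ 2` turns `x ^ (2 * (u - 1))` into `x ^ (2 * u)`.
-/

open MeasureTheory Set
open Real (exp)
open scoped NNReal

lemma exp_sub_one_le_mul_exp (r : ℝ) : exp r - 1 ≤ r * exp r := by
  have h : (1 - r) * exp r ≤ exp (-r) * exp r := by
    gcongr
    exact Real.one_sub_le_exp_neg r
  rw [← Real.exp_add, neg_add_cancel, Real.exp_zero] at h
  linarith

lemma dist_self_mul_exp_le {x r : ℝ} (hx : 0 ≤ x) (hr : 0 ≤ r) :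
    dist x (x * exp r) ≤ x * (r * exp r) := by
  have h_exp : 0 ≤ exp r - 1 := sub_nonneg.2 (Real.one_le_exp hr)
  calc dist x (x * exp r) = |x * (exp r - 1)| := by rw [dist_comm, Real.dist_eq, mul_sub_one]
    _ = x * (exp r - 1) := abs_of_nonneg (mul_nonneg hx h_exp)
    _ ≤ x * (r * exp r) := by gcongr; exact exp_sub_one_le_mul_exp r

lemma setIntegral_Ioc_le_of_le_mul {f : ℝ → ℝ} {a C : ℝ} (ha : 0 ≤ a)
    (hf_nonneg : ∀ r ∈ Ioc 0 a, 0 ≤ f r) (hf_le : ∀ r ∈ Ioc 0 a, f r ≤ C * r) :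
    ∫ r in Ioc 0 a, f r ≤ C * (a ^ 2 / 2) := by
  have h_int : IntegrableOn (fun r => C * r) (Ioc 0 a) :=
    (by fun_prop : Continuous fun r : ℝ => C * r).integrableOn_Ioc
  calc ∫ r in Ioc 0 a, f r
      ≤ ∫ r in Ioc 0 a, C * r :=
        integral_mono_of_nonneg (ae_restrict_of_forall_mem measurableSet_Ioc hf_nonneg) h_int
          (ae_restrict_of_forall_mem measurableSet_Ioc hf_le)
    _ = C * (a ^ 2 / 2) := by
        rw [← intervalIntegral.integral_of_le ha, intervalIntegral.integral_const_mul, integral_id,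
          zero_pow two_ne_zero, sub_zero]

section Lipschitz

variable {E : Type*} [PseudoMetricSpace E] {F : ℝ → E} {K : ℝ≥0} {x a : ℝ}

lemma dist_apply_mul_exp_le (hF : LipschitzOnWith K F (Ici x)) (hx : 0 ≤ x) {r : ℝ} (hr : 0 ≤ r) :
    dist (F x) (F (x * exp r)) ≤ K * (x * (r * exp r)) := by
  have h_mem : x ≤ x * exp r := le_mul_of_one_le_right hx (Real.one_le_exp hr)
  calc dist (F x) (F (x * exp r)) ≤ K * dist x (x * exp r) := hF.dist_le_mul x self_mem_Ici _ h_mem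
    _ ≤ K * (x * (r * exp r)) := by gcongr; exact dist_self_mul_exp_le hx hr

lemma setIntegral_dist_apply_mul_exp_le (hF : LipschitzOnWith K F (Ici x)) (hx : 0 ≤ x)
    (ha : 0 ≤ a) :
    ∫ r in Ioc 0 a, dist (F x) (F (x * exp r)) ≤ K * x * exp a * (a ^ 2 / 2) := by
  refine setIntegral_Ioc_le_of_le_mul ha (fun _ _ => dist_nonneg) fun r hr => ?_
  have hr_nonneg : 0 ≤ r := hr.1.le
  calc dist (F x) (F (x * exp r)) ≤ K * (x * (r * exp r)) := dist_apply_mul_exp_le hF hx hr_nonneg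
    _ ≤ K * (x * (r * exp a)) := by gcongr; exact hr.2
    _ = K * x * exp a * r := by ring

theorem statement8_general (hF : LipschitzOnWith K F (Ici x)) (hx : 0 < x) (u b : ℝ) {c T : ℝ}
    (hc : 0 ≤ c) (hT : 0 < T) :
    3 * b ^ 2 * T ^ 2 * x ^ (2 * (u - 1)) *
        (∫ r in Ioc 0 (2 * c / T), dist (F x) (F (x * exp r))) ^ 2 ≤
      K ^ 2 * x ^ (2 * u) * exp (4 * c / T) * 12 * b ^ 2 * c ^ 4 / T ^ 2 := by
  have h_int := setIntegral_dist_apply_mul_exp_le hF hx.le (a := 2 * c / T) (by positivity)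
  have h_rpow : x ^ (2 * u) = x ^ (2 * (u - 1)) * x ^ 2 := by
    rw [← Real.rpow_add_natCast hx.ne']
    congr 1
    push_cast
    ring
  have h_exp : exp (4 * c / T) = exp (2 * c / T) ^ 2 := by
    rw [← Real.exp_nat_mul]
    congr 1
    push_cast
    ring
  calc _ ≤ 3 * b ^ 2 * T ^ 2 * x ^ (2 * (u - 1)) *
        (K * x * exp (2 * c / T) * ((2 * c / T) ^ 2 / 2)) ^ 2 := by gcongr
    _ = _ := by
      rw [h_rpow, h_exp]
      field_simp
      ring

end Lipschitz

theorem statement8 (F : ℝ → ℝ) (L u x₀ b c T : ℝ)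
    (hrange : ∀ x : ℝ, 0 ≤ x → F x ∈ Set.Icc (0 : ℝ) 1) (hL : 0 < L)
    (hLip : ∀ s t : ℝ, 0 ≤ s → 0 ≤ t → |F s - F t| ≤ L * |s - t|)
    (hu : u < 1) (hx₀ : 0 < x₀) (hb : 2 / Real.pi < b) (hc : 0 < c) (hT : 0 < T) :
    3 * b ^ 2 * T ^ 2 * x₀ ^ (2 * (u - 1)) *
        (∫ r in Set.Ioc (0 : ℝ) (2 * c / T), |F x₀ - F (x₀ * Real.exp r)|) ^ 2 ≤
      L ^ 2 * x₀ ^ (2 * u) * Real.exp (4 * c / T) * 12 * b ^ 2 * c ^ 4 / T ^ 2 := by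
  have hF : LipschitzOnWith ⟨L, hL.le⟩ F (Ici x₀) := LipschitzOnWith.of_dist_le_mul
    fun s hs t ht => hLip s t (hx₀.le.trans hs) (hx₀.le.trans ht)
  exact statement8_general hF hx₀ u b hc.le hT
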